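/- Fix δ > 1/2 and for each σ > 0 let τ_*(σ) denote the unique minimizer of F over (0,∞). Then in the high-SNR limit, τ_*(σ) is asymptotic to σ/√(δ − 1/2); precisely, lim_{σ→0⁺} τ_*(σ) · √(δ − 1/2) / σ = 1. -/

import Mathlib

open MeasureTheory Set Filter

/-- The standard normal density `p(h) = (1/√(2π)) e^{−h²/2}`. -/
noncomputable def gaussPDF (h : ℝ) : ℝ := (Real.sqrt (2 * Real.pi))⁻¹ * Real.exp (-(h ^ 2) / 2)

/-- The objective function
`F(τ) = (τ/2)(δ − 1/2) + σ²/(2τ) + (τ/2)∫_{2/τ}^∞ (h − 2/τ)² p(h) dh`. -/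
noncomputable def Fobj (δ σ τ : ℝ) : ℝ :=
  τ / 2 * (δ - 1 / 2) + σ ^ 2 / (2 * τ)
    + τ / 2 * ∫ h in Set.Ioi (2 / τ), (h - 2 / τ) ^ 2 * gaussPDF h

/-!
In the variable `x = τ √a / σ`, with `a = δ − 1/2`, the explicit part of the objective is
`σ √a / 2 * (x + x⁻¹)`, while the integral, as a function `G(τ) ≥ 0`, tends to `0` as `τ → 0⁺`.
Comparing the minimizer with `σ / √a`, that is with `x = 1`, gives
`2 ≤ x + x⁻¹ ≤ 2 + G(σ / √a) / a`. The right side tends to `2`, and since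
`(x - x⁻¹)² = (x + x⁻¹)² - 4`, this forces `x → 1`.
-/

open scoped Topology

/-- The upper partial moment `∫ₜ^∞ (h − t)ⁿ w(h) dμ(h)` of order `n` of the weight `w`. The integral
in `Fobj` is the case `n = 2`, `w = gaussPDF`, `t = 2/τ`. -/
noncomputable def upperPartialMoment (μ : Measure ℝ) (n : ℕ) (w : ℝ → ℝ) (t : ℝ) : ℝ :=
  ∫ h in Ioi t, (h - t) ^ n * w h ∂μ

/-- The function `τ ↦ aτ/2 + σ²/(2τ)`, whose minimizer over `(0, ∞)` is `σ/√a` for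
`a, σ > 0`, perturbed by `τ G(τ)/2`. The objective `Fobj δ σ` has this shape with `a = δ − 1/2`. -/
noncomputable def perturbedObj (a : ℝ) (G : ℝ → ℝ) (σ τ : ℝ) : ℝ :=
  τ / 2 * a + σ ^ 2 / (2 * τ) + τ / 2 * G τ

section OrderedField

variable {𝕜 : Type*} [Field 𝕜] [LinearOrder 𝕜] [IsStrictOrderedRing 𝕜]

lemma two_le_add_inv {x : 𝕜} (hx : 0 < x) : 2 ≤ x + x⁻¹ := by
  have hsq : x + x⁻¹ - 2 = (x - 1) ^ 2 / x := by
    field_simp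
    ring
  exact sub_nonneg.1 (hsq ▸ by positivity)

lemma tendsto_const_div_nhdsGT_zero [TopologicalSpace 𝕜] [OrderTopology 𝕜] {c : 𝕜} (hc : 0 < c) :
    Tendsto (fun x => c / x) (𝓝[>] 0) atTop := by
  simpa only [div_eq_mul_inv] using tendsto_inv_nhdsGT_zero.const_mul_atTop hc

lemma tendsto_div_const_nhdsGT_zero [TopologicalSpace 𝕜] [OrderTopology 𝕜] {c : 𝕜} (hc : 0 < c) :
    Tendsto (fun x => x / c) (𝓝[>] 0) (𝓝[>] 0) := by
  simpa only [div_eq_mul_inv, zero_mul, id] using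
    TendstoNhdsWithinIoi.mul_const (inv_pos.2 hc) (tendsto_id (x := 𝓝[>] 0))

end OrderedField

lemma tendsto_one_of_tendsto_add_inv {α 𝕜 : Type*} [NormedField 𝕜] [NeZero (2 : 𝕜)]
    {l : Filter α} {x : α → 𝕜} (hx : ∀ᶠ i in l, x i ≠ 0)
    (h : Tendsto (fun i => x i + (x i)⁻¹) l (𝓝 2)) : Tendsto x l (𝓝 1) := by
  have hsq : Tendsto (fun i => (x i - (x i)⁻¹) ^ 2) l (𝓝 0) := by
    have hdisc : Tendsto (fun i => (x i + (x i)⁻¹) ^ 2 - 4) l (𝓝 0) := by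
      convert (h.pow 2).sub_const 4 using 2
      norm_num
    refine hdisc.congr' ?_
    filter_upwards [hx] with i hi
    field_simp
    ring
  have hdiff : Tendsto (fun i => x i - (x i)⁻¹) l (𝓝 0) := by
    rw [← Asymptotics.isLittleO_one_iff 𝕜] at hsq ⊢
    exact .of_pow (n := 2) (hsq.congr_right fun _ => (one_pow 2).symm) two_ne_zero
  have hhalf : Tendsto (fun i => (x i + (x i)⁻¹ + (x i - (x i)⁻¹)) / 2) l (𝓝 1) := by
    simpa only [add_zero, div_self (two_ne_zero (α := 𝕜))] using (h.add hdiff).div_const 2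
  refine hhalf.congr fun i => ?_
  rw [add_add_sub_cancel, add_self_div_two]

section UpperPartialMoment

variable {μ : Measure ℝ} {n : ℕ} {w : ℝ → ℝ} {t : ℝ}

lemma upperPartialMoment_nonneg (hw : ∀ h ∈ Ioi t, 0 ≤ w h) : 0 ≤ upperPartialMoment μ n w t :=
  setIntegral_nonneg measurableSet_Ioi fun h hh =>
    mul_nonneg (pow_nonneg (sub_nonneg.2 (le_of_lt hh)) n) (hw h hh)

lemma norm_upperPartialMoment_le (ht : 0 ≤ t)
    (hw : IntegrableOn (fun h => h ^ n * w h) (Ioi t) μ) :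
    ‖upperPartialMoment μ n w t‖ ≤ ∫ h in Ioi t, ‖h ^ n * w h‖ ∂μ := by
  refine norm_integral_le_of_norm_le hw.norm ?_
  filter_upwards [ae_restrict_mem measurableSet_Ioi] with h (hth : t < h)
  rw [norm_mul, norm_mul, norm_pow, norm_pow, Real.norm_of_nonneg (sub_nonneg.2 hth.le),
    Real.norm_of_nonneg (ht.trans hth.le)]
  have hpow : (h - t) ^ n ≤ h ^ n :=
    pow_le_pow_left₀ (sub_nonneg.2 hth.le) (sub_le_self h ht) n
  gcongr

lemma tendsto_upperPartialMoment_atTop_zero {b : ℝ}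
    (hw : IntegrableOn (fun h => h ^ n * w h) (Ioi b) μ) :
    Tendsto (upperPartialMoment μ n w) atTop (𝓝 0) := by
  have htail : Tendsto (fun t => ∫ h in Ioi t, ‖h ^ n * w h‖ ∂μ) atTop (𝓝 0) :=
    tendsto_integral_Ioi_zero tendsto_id
  refine squeeze_zero_norm' ?_ htail
  filter_upwards [eventually_ge_atTop 0, eventually_ge_atTop b] with t ht hbt
  exact norm_upperPartialMoment_le ht (hw.mono_set (Ioi_subset_Ioi hbt))

end UpperPartialMoment

lemma gaussPDF_nonneg (h : ℝ) : 0 ≤ gaussPDF h := by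
  unfold gaussPDF
  positivity

lemma integrable_pow_mul_gaussPDF (n : ℕ) : Integrable fun h => h ^ n * gaussPDF h := by
  have hexp : Integrable fun h : ℝ => h ^ (n : ℝ) * Real.exp (-(1 / 2) * h ^ 2) :=
    integrable_rpow_mul_exp_neg_mul_sq (by norm_num) (by linarith [n.cast_nonneg (α := ℝ)])
  convert hexp.const_mul (Real.sqrt (2 * Real.pi))⁻¹ using 2 with h
  rw [gaussPDF, Real.rpow_natCast, show -(h ^ 2) / 2 = -(1 / 2) * h ^ 2 by ring]
  ring

section PerturbedObj

variable {a σ τ : ℝ} {G : ℝ → ℝ}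

lemma perturbedObj_eq_rescaled (ha : 0 < a) (hσ : σ ≠ 0) (hτ : τ ≠ 0) :
    perturbedObj a G σ τ = σ * √a / 2 * (τ * √a / σ + (τ * √a / σ)⁻¹) + τ / 2 * G τ := by
  have hr : √a ≠ 0 := (Real.sqrt_pos.2 ha).ne'
  have hexplicit : τ / 2 * √a ^ 2 + σ ^ 2 / (2 * τ) =
      σ * √a / 2 * (τ * √a / σ + (τ * √a / σ)⁻¹) := by
    field_simp
  rw [perturbedObj, ← hexplicit, Real.sq_sqrt ha.le]

lemma perturbedObj_div_sqrt (ha : 0 < a) (hσ : σ ≠ 0) :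
    perturbedObj a G σ (σ / √a) = σ * √a / 2 * (2 + G (σ / √a) / a) := by
  have hr : √a ≠ 0 := (Real.sqrt_pos.2 ha).ne'
  have hscale : σ / √a = σ * √a / a := by
    rw [mul_div_assoc, Real.sqrt_div_self, div_eq_mul_inv]
  calc perturbedObj a G σ (σ / √a) = σ * √a / 2 * 2 + σ / √a / 2 * G (σ / √a) := by
        rw [perturbedObj_eq_rescaled ha hσ (div_ne_zero hσ hr), div_mul_cancel₀ σ hr,
          div_self hσ, inv_one, one_add_one_eq_two]
    _ = σ * √a / 2 * 2 + σ * √a / a / 2 * G (σ / √a) := by rw [← hscale]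
    _ = σ * √a / 2 * (2 + G (σ / √a) / a) := by ring

lemma add_inv_le_of_isMinOn_perturbedObj (ha : 0 < a) (hσ : 0 < σ) (hτ : 0 < τ) (hG : 0 ≤ G τ)
    (hmin : IsMinOn (perturbedObj a G σ) (Ioi 0) τ) :
    τ * √a / σ + (τ * √a / σ)⁻¹ ≤ 2 + G (σ / √a) / a := by
  have hr : 0 < √a := Real.sqrt_pos.2 ha
  refine le_of_mul_le_mul_left ?_ (by positivity : 0 < σ * √a / 2)
  calc σ * √a / 2 * (τ * √a / σ + (τ * √a / σ)⁻¹) ≤ perturbedObj a G σ τ := by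
        rw [perturbedObj_eq_rescaled ha hσ.ne' hτ.ne']
        exact le_add_of_nonneg_right (by positivity)
    _ ≤ perturbedObj a G σ (σ / √a) := hmin (mem_Ioi.2 (div_pos hσ hr))
    _ = σ * √a / 2 * (2 + G (σ / √a) / a) := perturbedObj_div_sqrt ha hσ.ne'

end PerturbedObj

lemma Fobj_eq_perturbedObj (δ σ : ℝ) :
    Fobj δ σ =
      perturbedObj (δ - 1 / 2) (fun τ => upperPartialMoment volume 2 gaussPDF (2 / τ)) σ :=
  rfl

theorem Fobj_minimizer_high_SNR_general {a : ℝ} (ha : 0 < a) {G τs : ℝ → ℝ}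
    (hG_nonneg : ∀ τ, 0 < τ → 0 ≤ G τ) (hG : Tendsto G (𝓝[>] 0) (𝓝 0))
    (hτs_pos : ∀ᶠ σ in 𝓝[>] 0, 0 < τs σ)
    (hτs_min : ∀ᶠ σ in 𝓝[>] 0, IsMinOn (perturbedObj a G σ) (Ioi 0) (τs σ)) :
    Tendsto (fun σ => τs σ * √a / σ) (𝓝[>] 0) (𝓝 1) := by
  have hr : 0 < √a := Real.sqrt_pos.2 ha
  have hx : ∀ᶠ σ in 𝓝[>] 0, 0 < τs σ * √a / σ := by
    filter_upwards [self_mem_nhdsWithin, hτs_pos] with σ (hσ : 0 < σ) hτ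
    positivity
  have hupper : Tendsto (fun σ => 2 + G (σ / √a) / a) (𝓝[>] 0) (𝓝 2) := by
    simpa only [zero_div, add_zero, Function.comp_apply] using
      ((hG.comp (tendsto_div_const_nhdsGT_zero hr)).div_const a).const_add 2
  refine tendsto_one_of_tendsto_add_inv (hx.mono fun _ => ne_of_gt)
    (tendsto_of_tendsto_of_tendsto_of_le_of_le' tendsto_const_nhds hupper
      (hx.mono fun _ => two_le_add_inv) ?_)
  filter_upwards [self_mem_nhdsWithin, hτs_pos, hτs_min] with σ hσ hτ hmin
  exact add_inv_le_of_isMinOn_perturbedObj ha hσ hτ (hG_nonneg _ hτ) hmin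

/-- Fix `δ > 1/2` and for each `σ > 0` let `τ_*(σ)` be the unique minimizer of `F` over
`(0,∞)`.  Then in the high-SNR limit `σ → 0⁺` one has `τ_*(σ) ~ σ/√(δ − 1/2)`, i.e.
`τ_*(σ)·√(δ − 1/2)/σ → 1`. -/
theorem Fobj_minimizer_high_SNR (δ : ℝ) (hδ : 1 / 2 < δ)
    (τs : ℝ → ℝ)
    (hτs_pos : ∀ σ : ℝ, 0 < σ → 0 < τs σ)
    (hτs_min : ∀ σ : ℝ, 0 < σ → IsMinOn (Fobj δ σ) (Set.Ioi (0 : ℝ)) (τs σ))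
    (hτs_uniq : ∀ σ : ℝ, 0 < σ → ∀ τ ∈ Set.Ioi (0 : ℝ),
      IsMinOn (Fobj δ σ) (Set.Ioi (0 : ℝ)) τ → τ = τs σ) :
    Tendsto (fun σ : ℝ => τs σ * Real.sqrt (δ - 1 / 2) / σ)
      (nhdsWithin 0 (Set.Ioi (0 : ℝ))) (nhds 1) := by
  have hmoment : Tendsto (fun τ => upperPartialMoment volume 2 gaussPDF (2 / τ))
      (𝓝[>] 0) (𝓝 0) :=
    (tendsto_upperPartialMoment_atTop_zero (b := 0)
      (integrable_pow_mul_gaussPDF 2).integrableOn).comp (tendsto_const_div_nhdsGT_zero two_pos)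
  simp only [Fobj_eq_perturbedObj] at hτs_min
  exact Fobj_minimizer_high_SNR_general (sub_pos.2 hδ)
    (fun _ _ => upperPartialMoment_nonneg fun h _ => gaussPDF_nonneg h) hmoment
    (eventually_nhdsWithin_of_forall hτs_pos) (eventually_nhdsWithin_of_forall hτs_min)
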